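/- Let f : ℝⁿ → ℝᵐ be strictly differentiable at x̄, let F : ℝⁿ ⇉ ℝᵐ be a set-valued map whose graph is locally closed at (x̄, ȳ), and let ȳ ∈ F(x̄). Then for every u ∈ ℝᵐ, D*(f + F)(x̄ | f(x̄) + ȳ)(u) = ∇f(x̄)ᵀ u + D*F(x̄ | ȳ)(u), where f + F denotes the set-valued map z ↦ { f(z) + w : w ∈ F(z) }. -/

import Mathlib

open Filter Topology Set Metric RealInnerProductSpace
open scoped ENNReal NNReal Pointwise

noncomputable section

/-- Graph of a set-valued map. -/
def svGraph {α β : Type*} (F : α → Set β) : Set (α × β) := {p | p.2 ∈ F p.1}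

/-- Inverse of a set-valued map. -/
def svInv {α β : Type*} (F : α → Set β) : β → Set α := fun y => {x | y ∈ F x}

/-- Local closedness of a set at a point of a metric space. -/
def LocClosedAt {α : Type*} [PseudoMetricSpace α] (s : Set α) (p : α) : Prop :=
  ∃ r : ℝ, 0 < r ∧ IsClosed (s ∩ Metric.closedBall p r)

section Cones

variable {X : Type*} [NormedAddCommGroup X] [NormedSpace ℝ X]

/-- Bouligand-Severi contingent cone. -/
def contingentCone (Ω : Set X) (x : X) : Set X :=
  { u | ∃ (t : ℕ → ℝ) (uk : ℕ → X), (∀ k, 0 < t k) ∧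
      Tendsto t atTop (𝓝 0) ∧ Tendsto uk atTop (𝓝 u) ∧ ∀ k, x + t k • uk k ∈ Ω }

/-- Bouligand paratingent cone. -/
def paratingentCone (Ω : Set X) (x : X) : Set X :=
  { u | ∃ (t : ℕ → ℝ) (uk : ℕ → X) (xk : ℕ → X), (∀ k, 0 < t k) ∧
      Tendsto t atTop (𝓝 0) ∧ Tendsto uk atTop (𝓝 u) ∧
      (∀ k, xk k ∈ Ω) ∧ Tendsto xk atTop (𝓝 x) ∧ ∀ k, xk k + t k • uk k ∈ Ω }

end Cones

section NormalCones

variable {X : Type*} [NormedAddCommGroup X] [InnerProductSpace ℝ X]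

/-- Fréchet (regular) normal cone. -/
def frechetNormalCone (Ω : Set X) (x : X) : Set X :=
  { v | ∀ ε : ℝ, 0 < ε → ∃ δ : ℝ, 0 < δ ∧ ∀ y ∈ Ω, ‖y - x‖ < δ →
      ⟪v, y - x⟫ ≤ ε * ‖y - x‖ }

/-- Limiting (Mordukhovich) normal cone. -/
def limitingNormalCone (Ω : Set X) (x : X) : Set X :=
  { v | ∃ (xk : ℕ → X) (vk : ℕ → X), (∀ k, xk k ∈ Ω) ∧
      Tendsto xk atTop (𝓝 x) ∧ Tendsto vk atTop (𝓝 v) ∧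
      ∀ k, vk k ∈ frechetNormalCone Ω (xk k) }

end NormalCones

section Derivatives

variable {E F : Type*} [NormedAddCommGroup E] [NormedSpace ℝ E]
  [NormedAddCommGroup F] [NormedSpace ℝ F]

/-- Graphical derivative. -/
def gDeriv (Fm : E → Set F) (x : E) (y : F) : E → Set F := fun u =>
  {v | (u, v) ∈ contingentCone (svGraph Fm) (x, y)}

/-- Strict graphical derivative. -/
def sgDeriv (Fm : E → Set F) (x : E) (y : F) : E → Set F := fun u =>
  {v | (u, v) ∈ paratingentCone (svGraph Fm) (x, y)}

end Derivatives

section Coderivative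

variable {E F : Type*} [NormedAddCommGroup E] [InnerProductSpace ℝ E]
  [NormedAddCommGroup F] [InnerProductSpace ℝ F]

/-- Coderivative: `w ∈ D*F(x|y)(z)` iff `(w, -z)` is in the limiting normal cone
to the graph of `F` (viewed inside the `ℓ²` product) at `(x, y)`. -/
def coDeriv (Fm : E → Set F) (x : E) (y : F) : F → Set E := fun z =>
  { w | (WithLp.equiv 2 (E × F)).symm (w, -z) ∈
      limitingNormalCone ((WithLp.equiv 2 (E × F)).symm '' svGraph Fm)
        ((WithLp.equiv 2 (E × F)).symm (x, y)) }

end Coderivative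

section Norms

variable {E F : Type*} [NormedAddCommGroup E] [NormedAddCommGroup F]

/-- Outer norm of a (positively homogeneous) set-valued map. -/
def outerNormSV (H : E → Set F) : ℝ≥0∞ :=
  ⨆ (x : E) (_ : ‖x‖ ≤ 1) (y : F) (_ : y ∈ H x), (‖y‖₊ : ℝ≥0∞)

/-- Inner norm of a (positively homogeneous) set-valued map. -/
def innerNormSV (H : E → Set F) : ℝ≥0∞ :=
  ⨆ (x : E) (_ : ‖x‖ ≤ 1), ⨅ (y : F) (_ : y ∈ H x), (‖y‖₊ : ℝ≥0∞)

/-- Positive homogeneity of a set-valued map. -/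
def PosHomogeneous {E F : Type*} [NormedAddCommGroup E] [NormedSpace ℝ E]
    [NormedAddCommGroup F] [NormedSpace ℝ F] (H : E → Set F) : Prop :=
  (0 : F) ∈ H 0 ∧ ∀ (c : ℝ), 0 < c → ∀ x, H (c • x) = c • (H x)

end Norms

section Stability

variable {E F : Type*} [NormedAddCommGroup E] [NormedAddCommGroup F]

/-- Metric regularity with constant `κ`. -/
def MetrRegWith (κ : ℝ≥0) (Fm : E → Set F) (xbar : E) (ybar : F) : Prop :=
  ∃ U ∈ 𝓝 xbar, ∃ V ∈ 𝓝 ybar, ∀ x ∈ U, ∀ y ∈ V,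
    EMetric.infEdist x (svInv Fm y) ≤ (κ : ℝ≥0∞) * EMetric.infEdist y (Fm x)

/-- The regularity modulus `reg (F; xbar|ybar)`. -/
def regMod (Fm : E → Set F) (xbar : E) (ybar : F) : ℝ≥0∞ :=
  ⨅ (κ : ℝ≥0) (_ : MetrRegWith κ Fm xbar ybar), (κ : ℝ≥0∞)

/-- Aubin property with constant `κ`. -/
def AubinWith (κ : ℝ≥0) (S : F → Set E) (ybar : F) (xbar : E) : Prop :=
  ∃ V ∈ 𝓝 ybar, ∃ U ∈ 𝓝 xbar, ∀ y ∈ V, ∀ y' ∈ V, ∀ x ∈ S y' ∩ U,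
    ∃ x' ∈ S y, ‖x - x'‖ ≤ (κ : ℝ) * ‖y - y'‖

/-- The Lipschitz modulus `lip (S; ybar|xbar)`. -/
def lipMod (S : F → Set E) (ybar : F) (xbar : E) : ℝ≥0∞ :=
  ⨅ (κ : ℝ≥0) (_ : AubinWith κ S ybar xbar), (κ : ℝ≥0∞)

/-- Strong metric subregularity with constant `κ`. -/
def SubregWith (κ : ℝ≥0) (Fm : E → Set F) (xbar : E) (ybar : F) : Prop :=
  ∃ U ∈ 𝓝 xbar, ∀ x ∈ U, (‖x - xbar‖₊ : ℝ≥0∞) ≤ (κ : ℝ≥0∞) * EMetric.infEdist ybar (Fm x)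

/-- The subregularity modulus `subreg (F; xbar|ybar)`. -/
def subregMod (Fm : E → Set F) (xbar : E) (ybar : F) : ℝ≥0∞ :=
  ⨅ (κ : ℝ≥0) (_ : SubregWith κ Fm xbar ybar), (κ : ℝ≥0∞)

/-- Isolated calmness with constant `κ`. -/
def CalmWith (κ : ℝ≥0) (S : F → Set E) (ybar : F) (xbar : E) : Prop :=
  ∃ V ∈ 𝓝 ybar, ∃ U ∈ 𝓝 xbar, ∀ y ∈ V, ∀ x ∈ S y ∩ U, ‖x - xbar‖ ≤ (κ : ℝ) * ‖y - ybar‖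

/-- The calmness modulus `clm (S; ybar|xbar)`. -/
def clmMod (S : F → Set E) (ybar : F) (xbar : E) : ℝ≥0∞ :=
  ⨅ (κ : ℝ≥0) (_ : CalmWith κ S ybar xbar), (κ : ℝ≥0∞)

/-- Strong metric regularity: metric regularity plus a single-valued localization
of the inverse. -/
def StrongMetrReg (Fm : E → Set F) (xbar : E) (ybar : F) : Prop :=
  (∃ κ : ℝ≥0, MetrRegWith κ Fm xbar ybar) ∧
  ∃ U ∈ 𝓝 xbar, ∃ V ∈ 𝓝 ybar, ∀ y ∈ V, (svInv Fm y ∩ U).Subsingleton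

end Stability

theorem LocClosedAt.preimage {α β : Type*} [PseudoMetricSpace α] [PseudoMetricSpace β]
    {g : α → β} {t : Set β} {p : α} (ht : LocClosedAt t (g p))
    (hg : ∀ᶠ x in 𝓝 p, ContinuousAt g x) : LocClosedAt (g ⁻¹' t) p := by
  obtain ⟨r, hr, hcl⟩ := ht
  have hball : ∀ᶠ x in 𝓝 p, g x ∈ closedBall (g p) r :=
    hg.self_of_nhds (closedBall_mem_nhds _ hr)
  obtain ⟨s, hs, hsub⟩ := nhds_basis_closedBall.eventually_iff.1 (hg.and hball)
  refine ⟨s, hs, ?_⟩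
  have hcont : ContinuousOn g (closedBall p s) := fun x hx =>
    (hsub hx).1.continuousWithinAt
  have := hcont.preimage_isClosed_of_isClosed isClosed_closedBall hcl
  convert this using 1
  ext x
  constructor
  · rintro ⟨h1, h2⟩
    exact ⟨h2, h1, (hsub h2).2⟩
  · rintro ⟨h1, h2, -⟩
    exact ⟨h2, h1⟩

section LimitingNormals

variable {X : Type*} [NormedAddCommGroup X] [InnerProductSpace ℝ X]

/-- A displacement from a locally nearest point is a proximal, hence a Fréchet, normal. -/
theorem mem_frechetNormalCone_of_isLocalNearest {Ω : Set X} {w n : X} {t ρ : ℝ} (ht : 0 < t)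
    (hρ : 0 < ρ) (h : ∀ y ∈ Ω, ‖y - w‖ < ρ → ‖t • n‖ ≤ ‖t • n - (y - w)‖) :
    n ∈ frechetNormalCone Ω w := by
  intro ε hε
  refine ⟨min ρ (2 * t * ε), by positivity, fun y hy hyw => ?_⟩
  have h1 := h y hy (hyw.trans_le (min_le_left _ _))
  have h2 : ‖y - w‖ < 2 * t * ε := hyw.trans_le (min_le_right _ _)
  have h3 : ‖t • n‖ ^ 2 ≤ ‖t • n - (y - w)‖ ^ 2 := by gcongr
  rw [norm_sub_sq_real, real_inner_smul_left] at h3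
  have h4 : ‖y - w‖ ^ 2 ≤ 2 * t * ε * ‖y - w‖ := by
    rw [sq]; gcongr
  have h5 : (2 * t) * ⟪n, y - w⟫ ≤ (2 * t) * (ε * ‖y - w‖) := by linarith
  exact le_of_mul_le_mul_left h5 (by positivity)

/-- In finite dimensions, limits of approximate Fréchet normals to a locally closed set are
limiting normals. -/
theorem mem_limitingNormalCone_of_approx [ProperSpace X] {Ω : Set X} {xbar v : X}
    (hΩ : LocClosedAt Ω xbar)
    (h : ∀ η : ℝ, 0 < η → ∃ x ∈ Ω, ∃ v' : X, ‖x - xbar‖ < η ∧ ‖v' - v‖ < η ∧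
      ∃ δ : ℝ, 0 < δ ∧ ∀ y ∈ Ω, ‖y - x‖ < δ → ⟪v', y - x⟫ ≤ η * ‖y - x‖) :
    v ∈ limitingNormalCone Ω xbar := by
  obtain ⟨r, hr, hcl⟩ := hΩ
  have key : ∀ η : ℝ, 0 < η → ∃ w n : X, w ∈ Ω ∧ n ∈ frechetNormalCone Ω w ∧
      ‖w - xbar‖ < η ∧ ‖n - v‖ < η := by
    intro η hη
    obtain ⟨η', hη', hη1, hη2⟩ : ∃ η' : ℝ, 0 < η' ∧ 4 * η' ≤ η ∧ 4 * η' ≤ r :=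
      ⟨min η r / 4, by positivity, by linarith [min_le_left η r], by linarith [min_le_right η r]⟩
    obtain ⟨x, hx, v', hxx, hvv, δ, hδ, hn⟩ := h η' hη'
    obtain ⟨t, ht, ht1⟩ : ∃ t : ℝ, 0 < t ∧ 2 * t * ‖v'‖ < min δ η' := by
      have hm : 0 < min δ η' := lt_min hδ hη'
      refine ⟨min δ η' / (2 * (‖v'‖ + 1)), by positivity, ?_⟩
      rw [show 2 * (min δ η' / (2 * (‖v'‖ + 1))) * ‖v'‖
        = min δ η' * (‖v'‖ / (‖v'‖ + 1)) by field_simp]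
      refine mul_lt_of_lt_one_right hm ?_
      rw [div_lt_one (by positivity)]
      linarith
    have hcomp : IsCompact (Ω ∩ closedBall xbar r) :=
      (isCompact_closedBall xbar r).of_isClosed_subset hcl inter_subset_right
    have hxK : x ∈ Ω ∩ closedBall xbar r :=
      ⟨hx, by rw [mem_closedBall, dist_eq_norm]; linarith⟩
    obtain ⟨w, hwK, hmin⟩ := hcomp.exists_isMinOn (f := fun y => ‖x + t • v' - y‖) ⟨x, hxK⟩
      (by fun_prop)
    have hwx : ‖x + t • v' - w‖ ≤ ‖t • v'‖ := by simpa using hmin hxK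
    have hdist : ‖w - x‖ ≤ 2 * t * ‖v'‖ := by
      have h1 : ‖w - x‖ ≤ ‖t • v'‖ + ‖x + t • v' - w‖ := by
        rw [show w - x = t • v' - (x + t • v' - w) by abel]
        exact norm_sub_le _ _
      have h2 : ‖t • v'‖ = t * ‖v'‖ := by rw [norm_smul, Real.norm_of_nonneg ht.le]
      linarith
    have hwn := hn w hwK.1 (hdist.trans_lt (ht1.trans_le (min_le_left _ _)))
    have hclose : ‖w - x‖ ≤ 2 * t * η' := by
      have h1 : ‖t • v' - (w - x)‖ ^ 2 ≤ ‖t • v'‖ ^ 2 := by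
        rw [show t • v' - (w - x) = x + t • v' - w by abel]
        gcongr
      rw [norm_sub_sq_real, real_inner_smul_left] at h1
      have h2 : t * ⟪v', w - x⟫ ≤ t * (η' * ‖w - x‖) := by gcongr
      by_contra! hcon
      have h3 : 0 < ‖w - x‖ := lt_trans (by positivity) hcon
      nlinarith
    have hwη : ‖w - x‖ < η' := hdist.trans_lt (ht1.trans_le (min_le_right _ _))
    have hwbar : ‖w - xbar‖ < 2 * η' := by
      have := norm_sub_le_norm_sub_add_norm_sub w x xbar
      linarith
    have htn : t • (v' - t⁻¹ • (w - x)) = x + t • v' - w := by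
      rw [smul_sub, smul_inv_smul₀ ht.ne']; abel
    refine ⟨w, v' - t⁻¹ • (w - x), hwK.1, ?_, by linarith, ?_⟩
    · refine mem_frechetNormalCone_of_isLocalNearest (ρ := r / 2) ht (by positivity) ?_
      intro y hy hyw
      rw [htn, show x + t • v' - w - (y - w) = x + t • v' - y by abel]
      refine hmin (show y ∈ Ω ∩ closedBall xbar r from ⟨hy, ?_⟩)
      rw [mem_closedBall, dist_eq_norm]
      have := norm_sub_le_norm_sub_add_norm_sub y w xbar
      linarith
    · have h1 : ‖t⁻¹ • (w - x)‖ ≤ 2 * η' := by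
        rw [norm_smul, Real.norm_of_nonneg (by positivity), inv_mul_le_iff₀ ht]
        linarith
      have h2 : ‖v' - t⁻¹ • (w - x) - v‖ ≤ ‖v' - v‖ + ‖t⁻¹ • (w - x)‖ := by
        rw [sub_right_comm]
        exact norm_sub_le _ _
      linarith
  choose! xk vk hxk hvk hxk' hvk' using key
  have hpos : ∀ k : ℕ, (0 : ℝ) < 1 / ((k : ℝ) + 1) := fun k => Nat.one_div_pos_of_nat
  refine ⟨fun k => xk (1 / ((k : ℝ) + 1)), fun k => vk (1 / ((k : ℝ) + 1)),
    fun k => hxk _ (hpos k), ?_, ?_, fun k => hvk _ (hpos k)⟩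
  · rw [tendsto_iff_norm_sub_tendsto_zero]
    exact squeeze_zero (fun _ => norm_nonneg _) (fun k => (hxk' _ (hpos k)).le)
      tendsto_one_div_add_atTop_nhds_zero_nat
  · rw [tendsto_iff_norm_sub_tendsto_zero]
    exact squeeze_zero (fun _ => norm_nonneg _) (fun k => (hvk' _ (hpos k)).le)
      tendsto_one_div_add_atTop_nhds_zero_nat

end LimitingNormals

section SumRule

variable {E F : Type*} [NormedAddCommGroup E] [NormedAddCommGroup F]

theorem WithLp.prod_norm_le_add (p : WithLp 2 (E × F)) : ‖p‖ ≤ ‖p.fst‖ + ‖p.snd‖ := by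
  rw [WithLp.prod_norm_eq_of_L2]
  refine Real.sqrt_le_iff.2 ⟨by positivity, ?_⟩
  nlinarith [norm_nonneg p.fst, norm_nonneg p.snd]

theorem LocClosedAt.toLp_image {s : Set (E × F)} {p : E × F} (hs : LocClosedAt s p) :
    LocClosedAt ((WithLp.equiv 2 (E × F)).symm '' s) ((WithLp.equiv 2 (E × F)).symm p) := by
  rw [Equiv.image_symm_eq_preimage]
  exact LocClosedAt.preimage (g := WithLp.equiv 2 (E × F)) hs
    (Eventually.of_forall fun _ => (WithLp.prod_continuous_ofLp 2 E F).continuousAt)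

theorem LocClosedAt.svGraph_add {f : E → F} {Fm : E → Set F} {xbar : E} {ybar : F}
    (hf : ∀ᶠ x in 𝓝 xbar, ContinuousAt f x) (h : LocClosedAt (svGraph Fm) (xbar, ybar)) :
    LocClosedAt (svGraph fun z => (f z + ·) '' Fm z) (xbar, f xbar + ybar) := by
  have hg : svGraph (fun z => (f z + ·) '' Fm z)
      = (fun p : E × F => (p.1, p.2 - f p.1)) ⁻¹' svGraph Fm := by
    ext ⟨x, y⟩
    simp [svGraph, sub_eq_neg_add]
  rw [hg]
  refine LocClosedAt.preimage (by simpa using h) ?_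
  have hf' : ∀ᶠ p in 𝓝 (xbar, f xbar + ybar), ContinuousAt f p.1 :=
    continuousAt_fst.eventually hf
  filter_upwards [hf'] with p hp
  exact continuousAt_fst.prodMk (continuousAt_snd.sub (hp.comp continuousAt_fst))

variable [InnerProductSpace ℝ E] [InnerProductSpace ℝ F]
  [FiniteDimensional ℝ E] [FiniteDimensional ℝ F]

/-- One inclusion of the sum rule; the other follows by applying it to `-f` and `f + F`. -/
theorem sub_adjoint_mem_coDeriv {f : E → F} {Fm : E → Set F} {xbar : E} {ybar : F}
    {A : E →L[ℝ] F} (hf : HasStrictFDerivAt f A xbar)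
    (hloc : LocClosedAt (svGraph Fm) (xbar, ybar)) {u : F} {a : E}
    (ha : a ∈ coDeriv (fun z => (f z + ·) '' Fm z) xbar (f xbar + ybar) u) :
    a - ContinuousLinearMap.adjoint A u ∈ coDeriv Fm xbar ybar u := by
  obtain ⟨pk, vk, hpk, hplim, hvlim, hvk⟩ := ha
  have : ProperSpace (WithLp 2 (E × F)) := FiniteDimensional.proper ℝ _
  refine mem_limitingNormalCone_of_approx hloc.toLp_image fun η hη => ?_
  have hx : Tendsto (fun k => (pk k).fst) atTop (𝓝 xbar) :=
    ((WithLp.prod_continuous_ofLp 2 E F).fst.tendsto _).comp hplim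
  have hy : Tendsto (fun k => (pk k).snd) atTop (𝓝 (f xbar + ybar)) :=
    ((WithLp.prod_continuous_ofLp 2 E F).snd.tendsto _).comp hplim
  have ha : Tendsto (fun k => (vk k).fst) atTop (𝓝 a) :=
    ((WithLp.prod_continuous_ofLp 2 E F).fst.tendsto _).comp hvlim
  have hb : Tendsto (fun k => (vk k).snd) atTop (𝓝 (-u)) :=
    ((WithLp.prod_continuous_ofLp 2 E F).snd.tendsto _).comp hvlim
  have hbase : Tendsto (fun k => WithLp.toLp 2 ((pk k).fst, (pk k).snd - f (pk k).fst)) atTop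
      (𝓝 (WithLp.toLp 2 (xbar, ybar))) := by
    refine ((WithLp.prod_continuous_toLp 2 E F).tendsto _).comp (hx.prodMk_nhds ?_)
    simpa using hy.sub (hf.continuousAt.tendsto.comp hx)
  have hnormal : Tendsto (fun k => WithLp.toLp 2
      ((vk k).fst + ContinuousLinearMap.adjoint A (vk k).snd, (vk k).snd)) atTop
      (𝓝 (WithLp.toLp 2 (a - ContinuousLinearMap.adjoint A u, -u))) := by
    refine ((WithLp.prod_continuous_toLp 2 E F).tendsto _).comp (Tendsto.prodMk_nhds ?_ hb)
    simpa [sub_eq_add_neg] using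
      ha.add (((ContinuousLinearMap.adjoint A).continuous.tendsto _).comp hb)
  obtain ⟨c, hc, hcη⟩ : ∃ c : ℝ, 0 < c ∧ (‖u‖ + 1) * c ≤ η / 2 :=
    ⟨η / 2 / (‖u‖ + 1), by positivity, by field_simp; rfl⟩
  have hstrict : ∀ᶠ q : E × E in 𝓝 (xbar, xbar),
      ‖f q.1 - f q.2 - A (q.1 - q.2)‖ ≤ c * ‖q.1 - q.2‖ := hf.isLittleO.def hc
  rw [nhds_prod_eq] at hstrict
  obtain ⟨U, hU, hUc⟩ := eventually_prod_self_iff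
    (r := fun x y => ‖f x - f y - A (x - y)‖ ≤ c * ‖x - y‖) |>.1 hstrict
  have hbnd : ∀ᶠ k in atTop, ‖(vk k).snd‖ < ‖u‖ + 1 := by
    refine hb.norm.eventually_lt_const ?_
    rw [norm_neg]; linarith
  obtain ⟨k, hkU, hkb, hk1, hk2⟩ := ((hx.eventually (eventually_mem_nhds_iff.2 hU)).and
    (hbnd.and ((hbase.eventually (ball_mem_nhds _ hη)).and
      (hnormal.eventually (ball_mem_nhds _ hη))))).exists
  obtain ⟨ρ, hρ, hρU⟩ := Metric.mem_nhds_iff.1 hkU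
  set x₀ := (pk k).fst with hx₀
  set b := (vk k).snd
  have hmem : (pk k).snd - f x₀ ∈ Fm x₀ := by
    obtain ⟨⟨x, y⟩, ⟨z, hz, hzy⟩, hxy⟩ := hpk k
    simp only at hz hzy
    rw [hx₀, ← hxy, ← hzy]
    simpa using hz
  refine ⟨_, ⟨(x₀, (pk k).snd - f x₀), hmem, rfl⟩, _, by simpa [dist_eq_norm] using hk1,
    by simpa [dist_eq_norm] using hk2, ?_⟩
  set L : ℝ := 2 + ‖A‖ + c with hL
  have hLpos : 0 < L := by positivity
  obtain ⟨δ, hδ, hδn⟩ := hvk k (η / 2 / L) (by positivity)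
  refine ⟨min ρ (δ / L), by positivity, ?_⟩
  rintro _ ⟨⟨x, y⟩, hxy, rfl⟩ hlt
  set d : WithLp 2 (E × F) := WithLp.toLp 2 (x - x₀, y - ((pk k).snd - f x₀))
  have hdeq : (WithLp.equiv 2 (E × F)).symm (x, y) -
      (WithLp.equiv 2 (E × F)).symm (x₀, (pk k).snd - f x₀) = d := rfl
  rw [hdeq] at hlt ⊢
  have hd1 : ‖x - x₀‖ ≤ ‖d‖ := WithLp.norm_fst_le E d
  have hd2 : ‖y - ((pk k).snd - f x₀)‖ ≤ ‖d‖ := WithLp.norm_snd_le E d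
  have hxU : x ∈ U := hρU (by
    rw [mem_ball, dist_eq_norm]; exact hd1.trans_lt (hlt.trans_le (min_le_left _ _)))
  have herr : ‖f x - f x₀ - A (x - x₀)‖ ≤ c * ‖x - x₀‖ :=
    hUc x hxU x₀ (mem_of_mem_nhds hkU)
  set d' : WithLp 2 (E × F) := WithLp.toLp 2 (x, f x + y) - pk k
  have hd'norm : ‖d'‖ ≤ L * ‖d‖ := by
    have h1 : ‖d'‖ ≤ ‖x - x₀‖ + ‖f x + y - (pk k).snd‖ := WithLp.prod_norm_le_add d'
    have h2 : f x + y - (pk k).snd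
        = (f x - f x₀ - A (x - x₀)) + A (x - x₀) + (y - ((pk k).snd - f x₀)) := by abel
    have h3 : ‖f x + y - (pk k).snd‖
        ≤ ‖f x - f x₀ - A (x - x₀)‖ + ‖A (x - x₀)‖ + ‖y - ((pk k).snd - f x₀)‖ :=
      h2 ▸ norm_add₃_le
    have h4 : ‖A (x - x₀)‖ ≤ ‖A‖ * ‖d‖ := (A.le_opNorm _).trans (by gcongr)
    have h5 : c * ‖x - x₀‖ ≤ c * ‖d‖ := by gcongr
    rw [hL]; linarith
  have hn := hδn (WithLp.toLp 2 (x, f x + y)) ⟨(x, f x + y), ⟨y, hxy, rfl⟩, rfl⟩ (by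
    refine hd'norm.trans_lt ?_
    rw [mul_comm, ← lt_div_iff₀ hLpos]
    exact hlt.trans_le (min_le_right _ _))
  have hn' : ⟪vk k, d'⟫ ≤ η / 2 * ‖d‖ := by
    refine hn.trans ?_
    calc η / 2 / L * ‖d'‖ ≤ η / 2 / L * (L * ‖d‖) := by gcongr
      _ = η / 2 * ‖d‖ := by field_simp
  have hsplit : ⟪WithLp.toLp 2 ((vk k).fst + ContinuousLinearMap.adjoint A b, b), d⟫
      = ⟪vk k, d'⟫ - ⟪b, f x - f x₀ - A (x - x₀)⟫ := by
    have h1 : ⟪vk k, d'⟫ = ⟪(vk k).fst, x - x₀⟫ + ⟪b, f x + y - (pk k).snd⟫ :=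
      WithLp.prod_inner_apply _ _
    have h2 : ⟪WithLp.toLp 2 ((vk k).fst + ContinuousLinearMap.adjoint A b, b), d⟫
        = ⟪(vk k).fst + ContinuousLinearMap.adjoint A b, x - x₀⟫
          + ⟪b, y - ((pk k).snd - f x₀)⟫ := WithLp.prod_inner_apply _ _
    rw [h1, h2, inner_add_left, ContinuousLinearMap.adjoint_inner_left]
    simp only [inner_sub_right, inner_add_right]
    ring
  have hberr : -⟪b, f x - f x₀ - A (x - x₀)⟫ ≤ η / 2 * ‖d‖ := by
    calc -⟪b, f x - f x₀ - A (x - x₀)⟫ ≤ ‖b‖ * ‖f x - f x₀ - A (x - x₀)‖ :=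
          (neg_le_abs _).trans (abs_real_inner_le_norm _ _)
      _ ≤ (‖u‖ + 1) * (c * ‖d‖) := by
          gcongr
          exact herr.trans (by gcongr)
      _ = (‖u‖ + 1) * c * ‖d‖ := by ring
      _ ≤ η / 2 * ‖d‖ := by gcongr
  change ⟪WithLp.toLp 2 ((vk k).fst + ContinuousLinearMap.adjoint A b, b), d⟫ ≤ _
  rw [hsplit]
  linarith

end SumRule

/-- Sum rule for coderivatives:
`D*(f+F)(xbar | f xbar + ybar)(u) = ∇f(xbar)ᵀ u + D*F(xbar|ybar)(u)`. -/
theorem coDeriv_sum_rule {n m : ℕ}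
    (f : EuclideanSpace ℝ (Fin n) → EuclideanSpace ℝ (Fin m))
    (Fm : EuclideanSpace ℝ (Fin n) → Set (EuclideanSpace ℝ (Fin m)))
    (xbar : EuclideanSpace ℝ (Fin n))
    (A : EuclideanSpace ℝ (Fin n) →L[ℝ] EuclideanSpace ℝ (Fin m))
    (hf : HasStrictFDerivAt f A xbar) (ybar : EuclideanSpace ℝ (Fin m)) (hy : ybar ∈ Fm xbar)
    (hloc : LocClosedAt (svGraph Fm) (xbar, ybar))
    (u : EuclideanSpace ℝ (Fin m)) :
    coDeriv (fun z => (f z + ·) '' Fm z) xbar (f xbar + ybar) u =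
      (ContinuousLinearMap.adjoint A u + ·) '' coDeriv Fm xbar ybar u := by
  have hcont : ∀ᶠ x in 𝓝 xbar, ContinuousAt f x := by
    obtain ⟨K, s, hs, hK⟩ := hf.exists_lipschitzOnWith
    filter_upwards [eventually_mem_nhds_iff.2 hs] with x hx
    exact hK.continuousOn.continuousAt hx
  apply Subset.antisymm
  · exact fun a ha => ⟨_, sub_adjoint_mem_coDeriv hf hloc ha, add_sub_cancel _ _⟩
  · rintro _ ⟨a, ha, rfl⟩
    have hF : (fun z => ((-f) z + ·) '' ((f z + ·) '' Fm z)) = Fm := by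
      funext z
      simp [image_image]
    have := sub_adjoint_mem_coDeriv (u := u) (a := a) hf.neg (hloc.svGraph_add hcont)
      (by rw [hF]; simpa using ha)
    simpa [add_comm] using this

end
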